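/- Let A be an abelian category with enough projective objects, equipped with a C₂-action (T, u). Then the category A^{(T,u)} of C₂-equivariant objects has enough projective objects: for every equivariant object (Y, β) there exist a projective object Q of A^{(T,u)} and an epimorphism Q → (Y, β). Concretely, if π : P → Y is an epimorphism in A with P projective, then the morphism with components (π, β^{-1} ∘ T(π)) : Ind(P) → (Y, β) is such an epimorphism from a projective object. -/

import Mathlib

/-!
The forgetful functor `U` has `Ind` both as a left and as a right adjoint. Being a left adjoint, `U`
preserves epimorphisms; hence its own left adjoint `Ind` preserves projective objects. The morphism
`(π, β⁻¹ ∘ T(π)) : Ind(P) ⟶ (Y, β)` is the transpose of `π` under `Ind ⊣ U`. If `π` is an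
epimorphism, so is the transpose: `π` is the composite of the unit `P ⟶ U(Ind(P))` with the
morphism underlying the transpose, which is therefore an epimorphism, and `U`, being faithful,
reflects epimorphisms.
-/

open CategoryTheory CategoryTheory.Limits

universe v u

/-- A `C₂`-action on a category `C`: an autoequivalence `T` together with a natural
isomorphism `u : Id_C ≅ T ⋙ T` satisfying `Tu = uT`. -/
structure C2Action (C : Type u) [Category.{v} C] where
  T : C ⥤ C
  isEquiv : T.IsEquivalence
  u : Functor.id C ≅ T ⋙ T
  compat : ∀ X : C, T.map (u.hom.app X) = u.hom.app (T.obj X)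

variable {C : Type u} [Category.{v} C]

/-- A `C₂`-equivariant object: `(X, α)` with `α : X ≅ T X` such that `T(α) ∘ α = u_X`. -/
structure EquivObj (A : C2Action C) where
  X : C
  α : X ≅ A.T.obj X
  cond : α.hom ≫ A.T.map α.hom = A.u.hom.app X

/-- A morphism of `C₂`-equivariant objects: `f : X ⟶ Y` with `β ∘ f = T(f) ∘ α`. -/
@[ext]
structure EquivHom {A : C2Action C} (M N : EquivObj A) where
  val : M.X ⟶ N.X
  comm : val ≫ N.α.hom = M.α.hom ≫ A.T.map val

/-- The category of `C₂`-equivariant objects. -/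
instance (A : C2Action C) : Category (EquivObj A) where
  Hom := EquivHom
  id M := ⟨𝟙 M.X, by simp⟩
  comp {M N P} f g := ⟨f.val ≫ g.val, by
    rw [Category.assoc, g.comm, ← Category.assoc, f.comm, Category.assoc, ← Functor.map_comp]⟩
  id_comp f := EquivHom.ext (Category.id_comp _)
  comp_id f := EquivHom.ext (Category.comp_id _)
  assoc f g h := EquivHom.ext (Category.assoc _ _ _)

@[simp] lemma EquivObj.comp_val {A : C2Action C} {M N P : EquivObj A} (f : M ⟶ N) (g : N ⟶ P) :
    (f ≫ g).val = f.val ≫ g.val := rfl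

@[simp] lemma EquivObj.id_val {A : C2Action C} (M : EquivObj A) :
    EquivHom.val (𝟙 M) = 𝟙 M.X := rfl

/-- The forgetful functor `U : C^{(T,u)} ⟶ C`, sending `(X, α)` to `X`. -/
def C2Action.forget (A : C2Action C) : EquivObj A ⥤ C where
  obj M := M.X
  map f := f.val
  map_id _ := rfl
  map_comp _ _ := rfl

section Additive

variable [Preadditive C] [HasBinaryBiproducts C]

/-- The equivariant object `Ind(X) = (X ⊕ T X, ((0, 1), (u_X, 0)))`, where the isomorphism
`X ⊕ T X ≅ T (X ⊕ T X)` is written with respect to the canonical identification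
`T (X ⊕ T X) ≅ T X ⊕ T² X`. -/
noncomputable def C2Action.indObj (A : C2Action C) [A.T.Additive] (X : C) : EquivObj A where
  X := X ⊞ A.T.obj X
  α :=
    { hom := biprod.desc (A.u.hom.app X ≫ A.T.map biprod.inr) (A.T.map biprod.inl)
      inv := biprod.lift (A.T.map biprod.snd ≫ A.u.inv.app X) (A.T.map biprod.fst)
      hom_inv_id := by
        apply biprod.hom_ext' <;> apply biprod.hom_ext <;>
          simp [← Functor.map_comp, ← Functor.map_comp_assoc]
      inv_hom_id := by
        rw [biprod.lift_desc, Category.assoc, ← Category.assoc (A.u.inv.app X),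
          Iso.inv_hom_id_app, Category.id_comp, ← Functor.map_comp, ← Functor.map_comp,
          ← Functor.map_add]
        have tot : (biprod.snd ≫ biprod.inr : X ⊞ A.T.obj X ⟶ _) + biprod.fst ≫ biprod.inl
            = 𝟙 _ := by
          rw [add_comm]; exact biprod.total
        rw [tot]
        exact A.T.map_id _ }
  cond := by
    apply biprod.hom_ext'
    · rw [← Category.assoc, biprod.inl_desc, Category.assoc, ← Functor.map_comp, biprod.inr_desc]
      have nat := A.u.hom.naturality (biprod.inl : X ⟶ X ⊞ A.T.obj X)
      simp only [Functor.id_map, Functor.comp_map] at nat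
      rw [← nat]
    · rw [← Category.assoc, biprod.inr_desc, ← Functor.map_comp, biprod.inl_desc]
      have nat := A.u.hom.naturality (biprod.inr : A.T.obj X ⟶ X ⊞ A.T.obj X)
      simp only [Functor.id_map, Functor.comp_map] at nat
      rw [Functor.map_comp, A.compat X, ← nat]

/-- The induction functor `Ind : C ⟶ C^{(T,u)}`, with `Ind(X) = (X ⊕ T X, ((0,1),(u_X,0)))`
and `Ind(f) = f ⊕ T(f)`. -/
noncomputable def C2Action.Ind (A : C2Action C) [A.T.Additive] : C ⥤ EquivObj A where
  obj X := A.indObj X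
  map {X Y} f :=
    { val := biprod.map f (A.T.map f)
      comm := by
        have nat := A.u.hom.naturality f
        simp only [Functor.id_map, Functor.comp_map] at nat
        apply biprod.hom_ext'
        · simp only [C2Action.indObj, biprod.inl_map_assoc, biprod.inl_desc,
            biprod.inl_desc_assoc, Category.assoc, ← Functor.map_comp, biprod.inr_map]
          rw [Functor.map_comp, reassoc_of% nat]
        · simp [C2Action.indObj, ← Functor.map_comp, ← Functor.map_comp_assoc] }
  map_id X := by
    apply EquivHom.ext
    apply biprod.hom_ext' <;> simp [C2Action.indObj]
  map_comp f g := by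
    apply EquivHom.ext
    apply biprod.hom_ext' <;> simp [C2Action.indObj]

/-- The morphism `Ind(X) ⟶ (Y, β)` with components `f : X ⟶ Y` and
`β⁻¹ ∘ T(f) : T(X) ⟶ Y` associated to a morphism `f : X ⟶ Y`. -/
noncomputable def C2Action.descHom (A : C2Action C) [A.T.Additive] {X : C} {N : EquivObj A}
    (f : X ⟶ N.X) : A.indObj X ⟶ N where
  val := biprod.desc f (A.T.map f ≫ N.α.inv)
  comm := by
    have nat := A.u.hom.naturality f
    simp only [Functor.id_map, Functor.comp_map] at nat
    have hβ : N.α.hom = A.u.hom.app N.X ≫ A.T.map N.α.inv := by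
      rw [← N.cond, Category.assoc, ← Functor.map_comp, N.α.hom_inv_id,
        CategoryTheory.Functor.map_id, Category.comp_id]
    show biprod.desc f (A.T.map f ≫ N.α.inv) ≫ N.α.hom
        = biprod.desc (A.u.hom.app X ≫ A.T.map biprod.inr) (A.T.map biprod.inl) ≫
          A.T.map (biprod.desc f (A.T.map f ≫ N.α.inv))
    apply biprod.hom_ext'
    · rw [← Category.assoc, biprod.inl_desc, ← Category.assoc, biprod.inl_desc, Category.assoc,
        ← Functor.map_comp, biprod.inr_desc, Functor.map_comp, ← Category.assoc, ← nat,
        Category.assoc, ← hβ]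
    · rw [← Category.assoc, biprod.inr_desc, ← Category.assoc, biprod.inr_desc,
        ← Functor.map_comp, biprod.inl_desc, Category.assoc, N.α.inv_hom_id, Category.comp_id]

end Additive

namespace C2Action

instance forget_faithful (A : C2Action C) : A.forget.Faithful where
  map_injective h := EquivHom.ext h

lemma u_hom_naturality (A : C2Action C) {X Y : C} (f : X ⟶ Y) :
    f ≫ A.u.hom.app Y = A.u.hom.app X ≫ A.T.map (A.T.map f) :=
  A.u.hom.naturality f

variable [Preadditive C] [HasBinaryBiproducts C] (A : C2Action C) [A.T.Additive]

/-- The inclusion of the summand `X` in `Ind(X) = X ⊕ T(X)`, the unit of `Ind ⊣ U`. Its codomain is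
written `(A.Ind.obj X).X`, which agrees with `X ⊞ A.T.obj X` only after unfolding `Ind`. -/
noncomputable def indInl (X : C) : X ⟶ (A.Ind.obj X).X :=
  (biprod.inl : X ⟶ X ⊞ A.T.obj X)

/-- The inclusion of the summand `T(X)` in `Ind(X) = X ⊕ T(X)`. -/
noncomputable def indInr (X : C) : A.T.obj X ⟶ (A.Ind.obj X).X :=
  (biprod.inr : A.T.obj X ⟶ X ⊞ A.T.obj X)

/-- The projection of `Ind(X) = X ⊕ T(X)` onto `X`, the counit of `U ⊣ Ind`. -/
noncomputable def indFst (X : C) : (A.Ind.obj X).X ⟶ X :=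
  (biprod.fst : X ⊞ A.T.obj X ⟶ X)

/-- The projection of `Ind(X) = X ⊕ T(X)` onto `T(X)`. -/
noncomputable def indSnd (X : C) : (A.Ind.obj X).X ⟶ A.T.obj X :=
  (biprod.snd : X ⊞ A.T.obj X ⟶ A.T.obj X)

lemma indInr_comp_α_hom (X : C) : A.indInr X ≫ (A.Ind.obj X).α.hom = A.T.map (A.indInl X) :=
  biprod.inr_desc _ _

lemma α_inv_comp_indFst (X : C) :
    (A.Ind.obj X).α.inv ≫ A.indFst X = A.T.map (A.indSnd X) ≫ A.u.inv.app X :=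
  biprod.lift_fst _ _

lemma α_inv_comp_indSnd (X : C) : (A.Ind.obj X).α.inv ≫ A.indSnd X = A.T.map (A.indFst X) :=
  biprod.lift_snd _ _

section LeftAdjoint

variable {A} {X : C} {N : EquivObj A}

lemma indInr_comp_val (φ : A.Ind.obj X ⟶ N) :
    A.indInr X ≫ φ.val = A.T.map (A.indInl X ≫ φ.val) ≫ N.α.inv := by
  rw [Iso.eq_comp_inv, Category.assoc, φ.comm,
    reassoc_of% A.indInr_comp_α_hom X, Functor.map_comp]

lemma Ind_obj_hom_ext {φ ψ : A.Ind.obj X ⟶ N}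
    (h : A.indInl X ≫ φ.val = A.indInl X ≫ ψ.val) : φ = ψ :=
  EquivHom.ext <| biprod.hom_ext' _ _ h <|
    show A.indInr X ≫ φ.val = A.indInr X ≫ ψ.val by rw [indInr_comp_val, indInr_comp_val, h]

lemma indInl_comp_descHom_val (f : X ⟶ N.X) : A.indInl X ≫ (A.descHom f).val = f :=
  biprod.inl_desc _ _

lemma indInl_comp_Ind_map_val {Y : C} (f : X ⟶ Y) :
    A.indInl X ≫ (A.Ind.map f).val = f ≫ A.indInl Y :=
  biprod.inl_map _ _

lemma descHom_comp {Y : C} (f : X ⟶ Y) (g : Y ⟶ N.X) :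
    A.descHom (f ≫ g) = A.Ind.map f ≫ A.descHom g :=
  Ind_obj_hom_ext <|
    calc A.indInl X ≫ (A.descHom (f ≫ g)).val
      _ = f ≫ A.indInl Y ≫ (A.descHom g).val := by
        rw [indInl_comp_descHom_val, indInl_comp_descHom_val]
      _ = A.indInl X ≫ (A.Ind.map f).val ≫ (A.descHom g).val :=
        (reassoc_of% indInl_comp_Ind_map_val f) _ |>.symm

end LeftAdjoint

section RightAdjoint

variable {A} {N : EquivObj A} {Z : C}

/-- The morphism `(Y, β) ⟶ Ind(Z)` with components `g : Y ⟶ Z` and `T(g) ∘ β : Y ⟶ T(Z)`: the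
transpose of `g` under the adjunction `U ⊣ Ind`. -/
noncomputable def liftHom (g : N.X ⟶ Z) : N ⟶ A.Ind.obj Z where
  val := biprod.lift g (N.α.hom ≫ A.T.map g)
  comm := by
    let l : N.X ⟶ (A.Ind.obj Z).X := biprod.lift g (N.α.hom ≫ A.T.map g)
    have l_fst : l ≫ A.indFst Z = g := biprod.lift_fst _ _
    have l_snd : l ≫ A.indSnd Z = N.α.hom ≫ A.T.map g := biprod.lift_snd _ _
    suffices l = (N.α.hom ≫ A.T.map l) ≫ (A.Ind.obj Z).α.inv from (Iso.eq_comp_inv _).1 this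
    refine biprod.hom_ext _ _ ?_ ?_
    · change l ≫ A.indFst Z = ((N.α.hom ≫ A.T.map l) ≫ (A.Ind.obj Z).α.inv) ≫ A.indFst Z
      simp only [Category.assoc, α_inv_comp_indFst]
      rw [← Functor.map_comp_assoc, l_fst, l_snd, Functor.map_comp_assoc, reassoc_of% N.cond,
        ← reassoc_of% A.u_hom_naturality g, Iso.hom_inv_id_app]
      exact (Category.comp_id g).symm
    · change l ≫ A.indSnd Z = ((N.α.hom ≫ A.T.map l) ≫ (A.Ind.obj Z).α.inv) ≫ A.indSnd Z
      rw [Category.assoc, Category.assoc, α_inv_comp_indSnd, ← Functor.map_comp, l_fst, l_snd]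

lemma val_comp_indSnd (φ : N ⟶ A.Ind.obj Z) :
    φ.val ≫ A.indSnd Z = N.α.hom ≫ A.T.map (φ.val ≫ A.indFst Z) := by
  rw [Functor.map_comp, ← reassoc_of% φ.comm, ← α_inv_comp_indSnd, Iso.hom_inv_id_assoc]

lemma hom_Ind_obj_ext {φ ψ : N ⟶ A.Ind.obj Z}
    (h : φ.val ≫ A.indFst Z = ψ.val ≫ A.indFst Z) : φ = ψ :=
  EquivHom.ext <| biprod.hom_ext _ _ h <|
    show φ.val ≫ A.indSnd Z = ψ.val ≫ A.indSnd Z by rw [val_comp_indSnd, val_comp_indSnd, h]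

lemma liftHom_val_comp_indFst (g : N.X ⟶ Z) : (liftHom g).val ≫ A.indFst Z = g :=
  biprod.lift_fst _ _

lemma Ind_map_val_comp_indFst {Y : C} (f : Y ⟶ Z) :
    (A.Ind.map f).val ≫ A.indFst Z = A.indFst Y ≫ f :=
  biprod.map_fst _ _

lemma liftHom_comp {W : C} (g : N.X ⟶ Z) (f : Z ⟶ W) :
    liftHom (g ≫ f) = liftHom g ≫ A.Ind.map f :=
  hom_Ind_obj_ext <| by
    rw [EquivObj.comp_val, Category.assoc, liftHom_val_comp_indFst, Ind_map_val_comp_indFst,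
      reassoc_of% liftHom_val_comp_indFst g]

end RightAdjoint

/-- `Ind` is left adjoint to the forgetful functor `U`: restriction along `X ⟶ X ⊕ T(X)` is a
bijection from the morphisms `Ind(X) ⟶ (Y, β)` to the morphisms `X ⟶ Y`, with inverse
`descHom`. -/
noncomputable def indForgetAdjunction : A.Ind ⊣ A.forget :=
  Adjunction.mkOfHomEquiv
    { homEquiv X _ :=
        { toFun φ := A.indInl X ≫ φ.val
          invFun f := A.descHom f
          left_inv _ := Ind_obj_hom_ext (indInl_comp_descHom_val _)
          right_inv f := indInl_comp_descHom_val f }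
      homEquiv_naturality_left_symm f g := descHom_comp f g
      homEquiv_naturality_right φ g := (Category.assoc _ φ.val g.val).symm }

/-- `Ind` is right adjoint to the forgetful functor `U`: composition with `Z ⊕ T(Z) ⟶ Z` is a
bijection from the morphisms `(Y, β) ⟶ Ind(Z)` to the morphisms `Y ⟶ Z`, with inverse
`liftHom`. -/
noncomputable def forgetIndAdjunction : A.forget ⊣ A.Ind :=
  Adjunction.mkOfHomEquiv
    { homEquiv _ Z :=
        { toFun g := liftHom g
          invFun φ := φ.val ≫ A.indFst Z
          left_inv g := liftHom_val_comp_indFst g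
          right_inv _ := hom_Ind_obj_ext (liftHom_val_comp_indFst _) }
      homEquiv_naturality_left_symm f φ := Category.assoc f.val φ.val _
      homEquiv_naturality_right g f := liftHom_comp g f }

instance forget_preservesEpimorphisms : A.forget.PreservesEpimorphisms :=
  Functor.preservesEpimorphisms_of_adjunction A.forgetIndAdjunction

lemma projective_indObj (P : C) [Projective P] : Projective (A.indObj P) :=
  A.indForgetAdjunction.map_projective P inferInstance

lemma epi_descHom {X : C} {N : EquivObj A} (π : X ⟶ N.X) [Epi π] : Epi (A.descHom π) :=
  have : Epi (A.descHom π).val := epi_of_epi_fac (indInl_comp_descHom_val π)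
  A.forget.epi_of_epi_map this

theorem enoughProjectives_equivObj_general [EnoughProjectives C] :
    EnoughProjectives (EquivObj A) ∧
      ∀ (N : EquivObj A) (P : C) (π : P ⟶ N.X), Projective P → Epi π →
        Projective (A.indObj P) ∧ Epi (A.descHom π) where
  left := ⟨fun N => ⟨{
    p := A.indObj (Projective.over N.X)
    projective := A.projective_indObj _
    f := A.descHom (Projective.π N.X)
    epi := A.epi_descHom _ }⟩⟩
  right _ P π _ _ := ⟨A.projective_indObj P, A.epi_descHom π⟩

end C2Action

/-- Let `A` be an abelian category with enough projective objects, equipped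
with a `C₂`-action `(T, u)`. Then the category of `C₂`-equivariant objects has enough
projective objects; concretely, if `π : P ⟶ Y` is an epimorphism in `A` with `P` projective,
then the morphism with components `(π, β⁻¹ ∘ T(π)) : Ind(P) ⟶ (Y, β)` is an epimorphism
from a projective object. -/
theorem C2Action.enoughProjectives_equivObj
    {C : Type u} [Category.{v} C] [Abelian C] [EnoughProjectives C]
    (A : C2Action C) [A.T.Additive] :
    EnoughProjectives (EquivObj A) ∧
      ∀ (N : EquivObj A) (P : C) (π : P ⟶ N.X), Projective P → Epi π →
        Projective (A.indObj P) ∧ Epi (A.descHom π) :=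
  A.enoughProjectives_equivObj_general
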